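/- Let U be a contractible open subset of ℂ, let {U_δ}_{δ∈I} be an open cover of U, and let q_δ : U_δ → SL(2,ℂ) be real analytic maps such that for all α, β ∈ I the map h_{αβ} := q_α q_β⁻¹ is upper triangular at every point of U_α ∩ U_β. Then this cocycle is a coboundary: there exist real analytic maps h_δ : U_δ → SL(2,ℂ) taking values in upper triangular matrices such that q_α q_β⁻¹ = h_α h_β⁻¹ on U_α ∩ U_β for all α, β; equivalently, the map g defined locally by g = h_δ⁻¹ q_δ on U_δ is a well-defined real analytic map g : U → SL(2,ℂ). (Cocycle–coboundary step in the proof of Lemma 4.1.) -/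

import Mathlib

open Matrix Complex

noncomputable section

section lift
variable {X E : Type*} [TopologicalSpace X] [NormedAddCommGroup E] [NormedSpace ℂ E]

def transp (Q : X → ℝ → (E →L[ℂ] E)) (ε : X → ℝ) (x : X) : ℕ → (E →L[ℂ] E)
  | 0 => ContinuousLinearMap.id ℂ E
  | n + 1 => (transp Q ε x n).comp (Q x (n * ε x))

theorem lift_exists [ContractibleSpace X] [ParacompactSpace X] [T2Space X]
    (P : X → (E →L[ℂ] E)) (hP : Continuous P) (hid : ∀ x u, P x (P x u) = P x u)
    (hne : ∀ x, ∃ u, P x u ≠ 0) :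
    ∃ v : X → E, Continuous v ∧ ∀ x, v x ≠ 0 ∧ P x (v x) = v x := by
  obtain ⟨y, ⟨H⟩⟩ := id_nullhomotopic X
  obtain ⟨u0, hu0⟩ := hne y
  set v0 := P y u0 with hv0
  have hv0' : P y v0 = v0 := hid y u0
  let Q : X → ℝ → (E →L[ℂ] E) := fun x t => P (H (Set.projIcc 0 1 zero_le_one t, x))
  have hQc : Continuous (fun p : X × ℝ => Q p.1 p.2) := by
    have : Continuous (Set.projIcc (0:ℝ) 1 zero_le_one) := continuous_projIcc
    fun_prop
  have hQ0 : ∀ x, Q x 0 = P x := by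
    intro x
    simp [Q]
  have hQ1 : ∀ x t, 1 ≤ t → Q x t = P y := by
    intro x t ht
    simp [Q, Set.projIcc_of_right_le _ ht]
  have hQid : ∀ x t u, Q x t (Q x t u) = Q x t u := fun x t u => hid _ u
  -- step function
  obtain ⟨ε, hε⟩ : ∃ ε : C(X, ℝ), ∀ x, ε x ∈ {e : ℝ | 0 < e ∧ ∀ s t : ℝ, |s - t| ≤ e →
      ‖Q x s - Q x t‖ < 1} := by
    apply exists_continuous_forall_mem_convex_of_local_const
    · intro x
      apply Set.OrdConnected.convex
      refine ⟨?_⟩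
      rintro a ⟨ha, ha'⟩ b ⟨hb, hb'⟩ e ⟨he, he'⟩
      exact ⟨lt_of_lt_of_le ha he, fun s t hst => hb' s t (hst.trans he')⟩
    · intro x0
      let G : C(X, C(unitInterval, E →L[ℂ] E)) :=
        ContinuousMap.curry ⟨fun p : X × unitInterval => P (H (p.2, p.1)), by fun_prop⟩
      have hG : ∀ x t, Q x t = G x (Set.projIcc 0 1 zero_le_one t) := fun x t => rfl
      have h1 : ∀ᶠ x in nhds x0, dist (G x) (G x0) < 1/3 :=
        Metric.tendsto_nhds.1 (G.continuous.tendsto x0) (1/3) (by norm_num)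
      have huc : UniformContinuous (G x0) :=
        CompactSpace.uniformContinuous_of_continuous (G x0).continuous
      obtain ⟨d, hd, hd'⟩ := Metric.uniformContinuous_iff.1 huc (1/3) (by norm_num)
      refine ⟨d/2, h1.mono ?_⟩
      intro x hx
      refine ⟨by positivity, ?_⟩
      intro s t hst
      rw [hG, hG, ← dist_eq_norm]
      set s' := Set.projIcc (0:ℝ) 1 zero_le_one s
      set t' := Set.projIcc (0:ℝ) 1 zero_le_one t
      have hs : dist (G x s') (G x0 s') < 1/3 := (ContinuousMap.dist_apply_le_dist _).trans_lt hx
      have ht : dist (G x t') (G x0 t') < 1/3 := (ContinuousMap.dist_apply_le_dist _).trans_lt hx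
      have hd2 : dist s' t' < d := by
        have : dist s' t' ≤ dist s t := by
          have := (LipschitzWith.projIcc (zero_le_one (α := ℝ))).dist_le_mul s t
          simpa using this
        rw [Real.dist_eq] at this
        linarith
      have h3 := hd' hd2
      have h4 := dist_triangle4 (G x s') (G x0 s') (G x0 t') (G x t')
      rw [dist_comm (G x0 t') (G x t')] at h4
      linarith
  have hεpos : ∀ x, 0 < ε x := fun x => (hε x).1
  have hTc : ∀ n, Continuous (fun x => transp Q ε x n) := by
    intro n
    induction n with
    | zero => exact continuous_const
    | succ n ih =>
      have : Continuous (fun x => Q x (n * ε x)) :=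
        hQc.comp (continuous_id.prodMk (continuous_const.mul ε.continuous))
      exact ih.clm_comp this
  have hPT : ∀ x n u, P x (transp Q ε x (n+1) u) = transp Q ε x (n+1) u := by
    intro x n
    induction n with
    | zero => intro u; simp [transp, hQ0, hid]
    | succ n ih =>
      intro u
      exact ih _
  have hTne : ∀ x (n : ℕ) u, u ≠ 0 → Q x (n * ε x) u = u → transp Q ε x (n+1) u ≠ 0 := by
    intro x n
    induction n with
    | zero =>
      intro u hu hf
      simp only [transp, ContinuousLinearMap.comp_apply]
      rw [hf]; simpa using hu
    | succ n ih =>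
      intro u hu hf
      have e1 : transp Q ε x (n+1+1) u = transp Q ε x (n+1) u := by
        rw [transp, ContinuousLinearMap.comp_apply, hf]
      have e2 : transp Q ε x (n+1) u = transp Q ε x (n+1) (Q x (n * ε x) u) := by
        rw [transp, ContinuousLinearMap.comp_apply, ContinuousLinearMap.comp_apply, hQid]
      rw [e1, e2]
      apply ih _ _ (hQid _ _ _)
      intro h0
      have hlt := (hε x).2 (((n+1 : ℕ) : ℝ) * ε x) (n * ε x) (by
        have : ((n+1 : ℕ) : ℝ) * ε x - n * ε x = ε x := by push_cast; ring
        rw [this, abs_of_pos (hεpos x)])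
      have h5 := ContinuousLinearMap.le_opNorm (Q x (((n+1 : ℕ) : ℝ) * ε x) - Q x (n * ε x)) u
      rw [_root_.sub_apply, hf, h0, sub_zero] at h5
      have : 0 < ‖u‖ := norm_pos_iff.2 hu
      nlinarith
  have hstab : ∀ x (m n : ℕ), 1 ≤ m * ε x → m ≤ n → transp Q ε x n v0 = transp Q ε x m v0 := by
    intro x m n hm hmn
    induction n, hmn using Nat.le_induction with
    | base => rfl
    | succ n hn ih =>
      rw [transp, ContinuousLinearMap.comp_apply, hQ1 x, hv0', ih]
      refine hm.trans ?_
      have : (m:ℝ) ≤ n := by exact_mod_cast hn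
      exact mul_le_mul_of_nonneg_right this (hεpos x).le
  let N : X → ℕ := fun x => ⌈1 / ε x⌉₊ + 1
  have hN : ∀ x, 1 ≤ (N x : ℝ) * ε x := by
    intro x
    have h1 : 1 / ε x ≤ (⌈1 / ε x⌉₊ : ℝ) := Nat.le_ceil _
    rw [div_le_iff₀ (hεpos x)] at h1
    have := hεpos x
    simp only [N]; push_cast; linarith
  refine ⟨fun x => transp Q ε x (N x) v0, ?_, ?_⟩
  · rw [continuous_iff_continuousAt]
    intro x0
    let M : ℕ := ⌈2 / ε x0⌉₊
    have hM : 2 ≤ (M : ℝ) * ε x0 := by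
      have h1 : 2 / ε x0 ≤ (⌈2 / ε x0⌉₊ : ℝ) := Nat.le_ceil _
      rwa [div_le_iff₀ (hεpos x0)] at h1
    have hev : ∀ᶠ x in nhds x0, ε x0 / 2 < ε x :=
      (ε.continuous.tendsto x0).eventually (lt_mem_nhds (by have := hεpos x0; linarith))
    have hcM : ContinuousAt (fun x => transp Q ε x M v0) x0 :=
      ((hTc M).clm_apply continuous_const).continuousAt
    refine hcM.congr (hev.mono ?_)
    intro x hx
    have hMx : 1 ≤ (M:ℝ) * ε x := by
      have : (0:ℝ) ≤ M := Nat.cast_nonneg _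
      nlinarith
    show transp Q ε x M v0 = transp Q ε x (N x) v0
    rw [← hstab x M (max M (N x)) hMx (le_max_left _ _),
      ← hstab x (N x) (max M (N x)) (hN x) (le_max_right _ _)]
  · intro x
    refine ⟨?_, hPT x _ v0⟩
    have e : transp Q ε x (N x) v0 = transp Q ε x (N x + 1) v0 :=
      (hstab x (N x) _ (hN x) (Nat.le_succ _)).symm
    show transp Q ε x (N x) v0 ≠ 0
    rw [e]
    exact hTne x _ v0 hu0 (by rw [hQ1 x _ (hN x), hv0'])
end lift

section approx
open MeasureTheory BoundedContinuousFunction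

theorem kernel_lower (b : ℂ → ℝ) (hb : Continuous b) (hb0 : ∀ y, 0 ≤ b y) (z : ℂ)
    (hz : ∀ y, 0 < b y + ‖z - y‖ ^ 2) :
    ∃ m > 0, ∀ y, m ≤ (1 + ‖y‖ ^ 2)⁻¹ * (b y + ‖z - y‖ ^ 2) := by
  obtain ⟨y0, -, hy0⟩ := (isCompact_closedBall (0:ℂ) (2 * ‖z‖ + 1)).exists_isMinOn
    ⟨0, by simp; positivity⟩
    (f := fun y => (1 + ‖y‖ ^ 2)⁻¹ * (b y + ‖z - y‖ ^ 2)) (by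
      apply Continuous.continuousOn
      have : ∀ y : ℂ, 1 + ‖y‖ ^ 2 ≠ 0 := fun y => by positivity
      fun_prop (disch := assumption))
  refine ⟨min ((1 + ‖y0‖ ^ 2)⁻¹ * (b y0 + ‖z - y0‖ ^ 2)) (1/8), ?_, ?_⟩
  · have := hz y0
    positivity
  · intro y
    by_cases hy : y ∈ Metric.closedBall (0:ℂ) (2 * ‖z‖ + 1)
    · exact (min_le_left _ _).trans (hy0 hy)
    · refine (min_le_right _ _).trans ?_
      simp only [Metric.mem_closedBall, dist_zero_right, not_le] at hy
      have h1 : ‖y‖ - ‖z‖ ≤ ‖z - y‖ := by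
        rw [norm_sub_rev]; exact norm_sub_norm_le y z
      have h2 : ‖y‖ / 2 ≤ ‖z - y‖ := by linarith
      have h3 := norm_nonneg z
      have h4 : (‖y‖/2)^2 ≤ ‖z - y‖^2 := by gcongr
      rw [inv_mul_eq_div, le_div_iff₀ (by positivity)]
      have := hb0 y
      nlinarith

theorem kernel_analytic {E : Type*} [NormedAddCommGroup E] [NormedSpace ℝ E]
    [CompleteSpace E]
    (b : ℂ → ℝ) (hb : Continuous b) (hb0 : ∀ y, 0 ≤ b y) (hb1 : ∀ y, b y ≤ 1)
    (U : Set ℂ) (hz : ∀ z ∈ U, ∀ y, 0 < b y + ‖z - y‖ ^ 2)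
    (ν : ℂ → E) (hν : Integrable ν) :
    ∃ w : ℂ → E, AnalyticOnNhd ℝ w U ∧ ∀ z ∈ U,
      Integrable (fun y => ((b y + ‖z - y‖ ^ 2)⁻¹ ^ 2) • ν y) ∧
      w z = ∫ y, ((b y + ‖z - y‖ ^ 2)⁻¹ ^ 2) • ν y := by
  have hne : ∀ y : ℂ, 1 + ‖y‖ ^ 2 ≠ 0 := fun y => by positivity
  have hcc : Continuous (fun y : ℂ => (1 + ‖y‖ ^ 2)⁻¹) := by fun_prop (disch := assumption)
  have hc0 : ∀ y : ℂ, 0 < (1 + ‖y‖ ^ 2)⁻¹ := fun y => by positivity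
  have hc1 : ∀ y : ℂ, (1 + ‖y‖ ^ 2)⁻¹ ≤ 1 := fun y => by
    apply inv_le_one_of_one_le₀; nlinarith [sq_nonneg ‖y‖]
  have hc2 : ∀ y : ℂ, (1 + ‖y‖ ^ 2)⁻¹ * ‖y‖ ^ 2 ≤ 1 := fun y => by
    rw [inv_mul_eq_div, div_le_one (by positivity)]; linarith
  have hc3 : ∀ y : ℂ, (1 + ‖y‖ ^ 2)⁻¹ * ‖y‖ ≤ 1 := fun y => by
    rw [inv_mul_eq_div, div_le_one (by positivity)]; nlinarith [sq_nonneg (‖y‖ - 1)]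
  let c : ℂ →ᵇ ℝ := ofNormedAddCommGroup (fun y => (1 + ‖y‖ ^ 2)⁻¹) hcc 1 (fun y => by
    rw [Real.norm_of_nonneg (hc0 y).le]; exact hc1 y)
  let cb : ℂ →ᵇ ℝ := ofNormedAddCommGroup
    (fun y => (1 + ‖y‖ ^ 2)⁻¹ * (b y)) (hcc.mul hb) 1 (fun y => by
      rw [Real.norm_of_nonneg (mul_nonneg (hc0 y).le (hb0 y))]
      exact mul_le_one₀ (hc1 y) (hb0 y) (hb1 y))
  let cs : ℂ →ᵇ ℝ := ofNormedAddCommGroup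
    (fun y => (1 + ‖y‖ ^ 2)⁻¹ * ‖y‖ ^ 2) (hcc.mul (by fun_prop)) 1 (fun y => by
      rw [Real.norm_of_nonneg (mul_nonneg (hc0 y).le (by positivity))]
      exact hc2 y)
  let cr : ℂ →ᵇ ℝ := ofNormedAddCommGroup
    (fun y => (1 + ‖y‖ ^ 2)⁻¹ * y.re) (hcc.mul (by fun_prop)) 1 (fun y => by
      rw [norm_mul, Real.norm_of_nonneg (hc0 y).le]
      exact (mul_le_mul_of_nonneg_left (Complex.abs_re_le_norm y) (hc0 y).le).trans (hc3 y))
  let ci : ℂ →ᵇ ℝ := ofNormedAddCommGroup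
    (fun y => (1 + ‖y‖ ^ 2)⁻¹ * y.im) (hcc.mul (by fun_prop)) 1 (fun y => by
      rw [norm_mul, Real.norm_of_nonneg (hc0 y).le]
      exact (mul_le_mul_of_nonneg_left (Complex.abs_im_le_norm y) (hc0 y).le).trans (hc3 y))
  let a : ℂ → (ℂ →ᵇ ℝ) := fun z =>
    cb + cs - (2 * z.re) • cr - (2 * z.im) • ci + (z.re * z.re + z.im * z.im) • c
  have ha : ∀ z y, a z y = (1 + ‖y‖ ^ 2)⁻¹ * (b y + ‖z - y‖ ^ 2) := by
    intro z y
    have e1 : a z y = (1 + ‖y‖ ^ 2)⁻¹ * (b y) + (1 + ‖y‖ ^ 2)⁻¹ * ‖y‖ ^ 2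
      - (2 * z.re) * ((1 + ‖y‖ ^ 2)⁻¹ * y.re) - (2 * z.im) * ((1 + ‖y‖ ^ 2)⁻¹ * y.im)
      + (z.re * z.re + z.im * z.im) * (1 + ‖y‖ ^ 2)⁻¹ := rfl
    rw [e1]
    have e2 : ‖z - y‖ ^ 2 = (z.re - y.re)^2 + (z.im - y.im)^2 := by
      rw [Complex.sq_norm, Complex.normSq_apply]; simp; ring
    have e3 : ‖y‖ ^ 2 = y.re^2 + y.im^2 := by
      rw [Complex.sq_norm, Complex.normSq_apply]; ring
    rw [e2]
    generalize (1 + ‖y‖ ^ 2)⁻¹ = C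
    rw [e3]; ring
  have haan : ∀ z, AnalyticAt ℝ a z := by
    intro z
    have hr : AnalyticAt ℝ (fun z : ℂ => z.re) z := Complex.reCLM.analyticAt z
    have hi : AnalyticAt ℝ (fun z : ℂ => z.im) z := Complex.imCLM.analyticAt z
    exact (((analyticAt_const.sub ((analyticAt_const.mul hr).smul analyticAt_const)).sub
      ((analyticAt_const.mul hi).smul analyticAt_const)).add
      (((hr.mul hr).add (hi.mul hi)).smul analyticAt_const))
  have hunit : ∀ z ∈ U, ∃ u : (ℂ →ᵇ ℝ)ˣ, (u : ℂ →ᵇ ℝ) = a z ∧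
      ∀ y, ((u⁻¹ : (ℂ →ᵇ ℝ)ˣ) : ℂ →ᵇ ℝ) y = (a z y)⁻¹ := by
    intro z hzU
    obtain ⟨m, hm, hml⟩ := kernel_lower b hb hb0 z (hz z hzU)
    have hpos : ∀ y, 0 < a z y := fun y => by rw [ha]; exact hm.trans_le (hml y)
    let g : ℂ →ᵇ ℝ := ofNormedAddCommGroup (fun y => (a z y)⁻¹)
      ((a z).continuous.inv₀ (fun y => (hpos y).ne')) m⁻¹ (fun y => by
        rw [Real.norm_of_nonneg (inv_nonneg.2 (hpos y).le)]
        apply inv_anti₀ hm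
        rw [ha]; exact hml y)
    have h1 : a z * g = 1 := by
      ext y
      exact mul_inv_cancel₀ (hpos y).ne'
    exact ⟨⟨a z, g, h1, by rw [mul_comm]; exact h1⟩, rfl, fun y => rfl⟩
  have hint : ∀ f : ℂ →ᵇ ℝ, Integrable (fun y => f y • ν y) := by
    intro f
    refine hν.bdd_smul ‖f‖ f.continuous.aestronglyMeasurable ?_
    exact Filter.Eventually.of_forall (fun y => f.norm_coe_le_norm y)
  let L : (ℂ →ᵇ ℝ) →L[ℝ] E := LinearMap.mkContinuous
    { toFun := fun f => ∫ y, f y • ν y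
      map_add' := fun f g => by
        simp only [BoundedContinuousFunction.add_apply, add_smul]
        exact integral_add (hint f) (hint g)
      map_smul' := fun t f => by
        simp only [BoundedContinuousFunction.smul_apply, smul_assoc, RingHom.id_apply]
        exact integral_smul t _ } (∫ y, ‖ν y‖) (fun f => by
        refine (norm_integral_le_integral_norm _).trans ?_
        rw [mul_comm, ← integral_const_mul]
        refine integral_mono (hint f).norm (hν.norm.const_mul _) (fun y => ?_)
        simp only [norm_smul]
        exact mul_le_mul_of_nonneg_right (f.norm_coe_le_norm y) (norm_nonneg _))
  have hval : ∀ z ∈ U, ∀ y, ((c * Ring.inverse (a z)) ^ 2) y = (b y + ‖z - y‖ ^ 2)⁻¹ ^ 2 := by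
    intro z hzU y
    obtain ⟨u, hu, hui⟩ := hunit z hzU
    have : ((c * Ring.inverse (a z)) ^ 2) y = (c y * (Ring.inverse (a z)) y) ^ 2 := rfl
    rw [this, ← hu, Ring.inverse_unit, hui, ha]
    have : c y = (1 + ‖y‖ ^ 2)⁻¹ := rfl
    rw [this, mul_inv, ← mul_assoc, mul_inv_cancel₀ (hc0 y).ne', one_mul]
  refine ⟨fun z => L ((c * Ring.inverse (a z)) ^ 2), ?_, ?_⟩
  · intro z hzU
    obtain ⟨u, hu, -⟩ := hunit z hzU
    have h1 : AnalyticAt ℝ (fun z => Ring.inverse (a z)) z := by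
      have := analyticAt_inverse (𝕜 := ℝ) u
      rw [hu] at this
      exact this.comp (haan z)
    exact (L.analyticAt _).comp ((analyticAt_const.mul h1).pow 2)
  · intro z hzU
    have := hint ((c * Ring.inverse (a z)) ^ 2)
    simp only [hval z hzU] at this
    refine ⟨this, ?_⟩
    show ∫ y, ((c * Ring.inverse (a z)) ^ 2) y • ν y = _
    simp only [hval z hzU]
end approx

section approx2
open MeasureTheory

theorem radius_exists {E : Type*} [NormedAddCommGroup E] [InnerProductSpace ℂ E]
    (U : Set ℂ) (hU : IsOpen U) (v : ℂ → E) (hv : ContinuousOn v U)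
    (hv1 : ∀ z ∈ U, ‖v z‖ = 1) :
    ∃ r : ℂ → ℝ, (∀ y, 0 ≤ r y) ∧ (∀ y, r y ≤ (1 + ‖y‖)⁻¹) ∧ (∀ x y, |r x - r y| ≤ ‖x - y‖) ∧
      (∀ y ∈ U, 0 < r y) ∧ (∀ y, y ∉ U → r y = 0) ∧
      (∀ y z, ‖z - y‖ < r y → z ∈ U ∧ y ∈ U ∧ 1/2 < (inner ℂ (v z) (v y)).re) := by
  let f : ℂ × ℂ → ℝ := fun p => (inner ℂ (v p.2) (v p.1)).re
  have hf : ContinuousOn f (U ×ˢ U) := by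
    have h1 : ContinuousOn (fun p : ℂ × ℂ => v p.1) (U ×ˢ U) :=
      hv.comp continuous_fst.continuousOn (fun p hp => hp.1)
    have h2 : ContinuousOn (fun p : ℂ × ℂ => v p.2) (U ×ˢ U) :=
      hv.comp continuous_snd.continuousOn (fun p hp => hp.2)
    exact Complex.continuous_re.comp_continuousOn (h2.inner h1)
  let W : Set (ℂ × ℂ) := ((U ×ˢ U) ∩ f ⁻¹' (Set.Ioi (1/2))) ∩ {p | dist p.1 p.2 < 1}
  have hW : IsOpen W := (hf.isOpen_inter_preimage (hU.prod hU) isOpen_Ioi).inter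
    (isOpen_lt (by fun_prop) continuous_const)
  have hWc : (Wᶜ).Nonempty := ⟨(0, 1), fun h => by
    have := h.2
    simp at this⟩
  have hdiag : ∀ y ∈ U, (y, y) ∈ W := by
    intro y hy
    refine ⟨⟨⟨hy, hy⟩, ?_⟩, by simp⟩
    show 1/2 < (inner ℂ (v y) (v y)).re
    rw [inner_self_eq_norm_sq_to_K, hv1 y hy]; norm_num
  let ρ : ℂ → ℝ := fun y => Metric.infDist (y, y) Wᶜ
  have hρl : ∀ x y, |ρ x - ρ y| ≤ ‖x - y‖ := by
    intro x y
    have := (Metric.lipschitz_infDist_pt Wᶜ).dist_le_mul (x, x) (y, y)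
    rw [Real.dist_eq] at this
    simpa [Prod.dist_eq, dist_eq_norm] using this
  have hgl : ∀ x y : ℂ, |(1 + ‖x‖)⁻¹ - (1 + ‖y‖)⁻¹| ≤ ‖x - y‖ := by
    intro x y
    have hx : 0 < 1 + ‖x‖ := by positivity
    have hy : 0 < 1 + ‖y‖ := by positivity
    rw [inv_sub_inv hx.ne' hy.ne', abs_div, abs_of_pos (mul_pos hx hy)]
    have h1 : |1 + ‖y‖ - (1 + ‖x‖)| ≤ ‖x - y‖ := by
      rw [add_sub_add_left_eq_sub, norm_sub_rev x y]; exact abs_norm_sub_norm_le y x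
    refine (div_le_self (abs_nonneg _) ?_).trans h1
    nlinarith [norm_nonneg x, norm_nonneg y, mul_nonneg (norm_nonneg x) (norm_nonneg y)]
  refine ⟨fun y => min (ρ y) (1 + ‖y‖)⁻¹, ?_, ?_, ?_, ?_, ?_, ?_⟩
  · intro y
    exact le_min Metric.infDist_nonneg (by positivity)
  · intro y; exact min_le_right _ _
  · intro x y
    exact (abs_min_sub_min_le_max _ _ _ _).trans (max_le (hρl x y) (hgl x y))
  · intro y hy
    refine lt_min ?_ (by positivity)
    exact (hW.isClosed_compl.notMem_iff_infDist_pos hWc).1 (fun h => h (hdiag y hy))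
  · intro y hy
    have : ρ y = 0 := Metric.infDist_zero_of_mem (fun h => hy h.1.1.1)
    show min (ρ y) _ = 0
    rw [this]; apply min_eq_left; positivity
  · intro y z hyz
    have h1 : ‖z - y‖ < ρ y := lt_of_lt_of_le hyz (min_le_left _ _)
    have h2 : (y, z) ∈ W := by
      by_contra hn
      have := Metric.infDist_le_dist_of_mem (x := (y, y)) (s := Wᶜ) hn
      rw [Prod.dist_eq, dist_self, dist_comm, dist_eq_norm,
        max_eq_right (norm_nonneg _)] at this
      exact absurd h1 (not_lt.2 this)
    exact ⟨h2.1.1.2, h2.1.1.1, h2.1.2⟩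

theorem approx_exists {E : Type*} [NormedAddCommGroup E] [InnerProductSpace ℂ E] [CompleteSpace E]
    (U : Set ℂ) (hU : IsOpen U) (v : ℂ → E) (hv : ContinuousOn v U)
    (hv1 : ∀ z ∈ U, ‖v z‖ = 1) :
    ∃ w : ℂ → E, AnalyticOnNhd ℝ w U ∧ ∀ z ∈ U, 0 < (inner ℂ (v z) (w z)).re := by
  obtain ⟨r, hr0, hr1, hrl, hrU, hrUc, hr⟩ := radius_exists U hU v hv hv1
  have hrle : ∀ y, r y ≤ 1 := fun y => (hr1 y).trans
    (inv_le_one_of_one_le₀ (by linarith [norm_nonneg y]))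
  have hrc : Continuous r := by
    have : LipschitzWith 1 r := LipschitzWith.of_dist_le_mul (fun x y => by
      simpa [Real.dist_eq, dist_eq_norm] using hrl x y)
    exact this.continuous
  have hI : Integrable (fun y : ℂ => r y ^ 4) := by
    have h1 : Integrable (fun y : ℂ => (1 + ‖y‖) ^ (-(4:ℝ))) :=
      integrable_one_add_norm (by rw [Complex.finrank_real_complex]; norm_num)
    refine h1.mono' (hrc.pow 4).aestronglyMeasurable (Filter.Eventually.of_forall fun y => ?_)
    rw [Real.norm_of_nonneg (pow_nonneg (hr0 y) 4), Real.rpow_neg (by positivity)]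
    have : (1 + ‖y‖) ^ (4:ℝ) = (1 + ‖y‖) ^ 4 := by
      rw [← Real.rpow_natCast]; norm_num
    rw [this, ← inv_pow]
    exact pow_le_pow_left₀ (hr0 y) (hr1 y) 4
  set A := ∫ y : ℂ, r y ^ 4 with hA
  have hA0 : 0 ≤ A := integral_nonneg (fun y => pow_nonneg (hr0 y) 4)
  obtain ⟨η, hη0, hη4, hηA⟩ : ∃ η : ℝ, 0 < η ∧ η ≤ 1/4 ∧
      η ^ 2 * (A + 1) * (2 * 2 ^ 8 * 257 ^ 2) ≤ 1 := by
    refine ⟨1 / (4 * ((A + 1) * (2 * 2 ^ 8 * 257 ^ 2))), by positivity, ?_, ?_⟩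
    · rw [div_le_div_iff₀ (by positivity) (by norm_num)]; nlinarith
    · have h1 : 1 ≤ (A + 1) * (2 * 2 ^ 8 * 257 ^ 2) := by nlinarith
      set B := (A + 1) * (2 * 2 ^ 8 * 257 ^ 2)
      rw [mul_assoc, div_pow, div_mul_eq_mul_div, div_le_one (by positivity)]
      nlinarith
  let b : ℂ → ℝ := fun y => η ^ 2 * r y ^ 8
  have hb0 : ∀ y, 0 ≤ b y := fun y => mul_nonneg (by positivity) (pow_nonneg (hr0 y) 8)
  have hb1 : ∀ y, b y ≤ 1 := fun y =>
    mul_le_one₀ (by nlinarith) (pow_nonneg (hr0 y) 8) (pow_le_one₀ (hr0 y) (hrle y))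
  have hbz : ∀ z ∈ U, ∀ y, 0 < b y + ‖z - y‖ ^ 2 := by
    intro z hz y
    by_cases hy : y ∈ U
    · have := hrU y hy
      positivity
    · have : 0 < ‖z - y‖ := norm_pos_iff.2 (sub_ne_zero.2 (fun h => hy (h ▸ hz)))
      have := hb0 y
      positivity
  let ν : ℂ → E := fun y => r y ^ 8 • v y
  have hνI : Integrable ν := by
    have hind : ν = U.indicator ν := by
      symm
      rw [Set.indicator_eq_self]
      intro y hy
      by_contra hyU
      exact hy (by simp [ν, hrUc y hyU])
    refine hI.mono' ?_ (Filter.Eventually.of_forall fun y => ?_)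
    · rw [hind, aestronglyMeasurable_indicator_iff hU.measurableSet]
      exact ((hrc.pow 8).continuousOn.smul hv).aestronglyMeasurable hU.measurableSet
    · simp only [ν]
      by_cases hy : y ∈ U
      · rw [norm_smul, hv1 y hy, mul_one, Real.norm_of_nonneg (pow_nonneg (hr0 y) 8)]
        exact pow_le_pow_of_le_one (hr0 y) (hrle y) (by norm_num)
      · simp [hrUc y hy]
  obtain ⟨w, hwan, hw⟩ := kernel_analytic b (by fun_prop) hb0 hb1 U hbz ν hνI
  refine ⟨w, hwan, ?_⟩
  intro z hz
  obtain ⟨hint, hwz⟩ := hw z hz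
  have hint2 : Integrable (fun y => (inner ℂ (v z) (((b y + ‖z - y‖ ^ 2)⁻¹ ^ 2) • ν y)).re) :=
    (hint.const_inner (𝕜 := ℂ) (v z)).re
  have hre : (inner ℂ (v z) (w z)).re
      = ∫ y, (inner ℂ (v z) (((b y + ‖z - y‖ ^ 2)⁻¹ ^ 2) • ν y)).re := by
    rw [hwz, ← integral_inner hint]
    exact (integral_re (hint.const_inner (𝕜 := ℂ) (v z))).symm
  have hval : ∀ y, (inner ℂ (v z) (((b y + ‖z - y‖ ^ 2)⁻¹ ^ 2) • ν y)).re
      = ((b y + ‖z - y‖ ^ 2)⁻¹ ^ 2 * r y ^ 8) * (inner ℂ (v z) (v y)).re := by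
    intro y
    simp only [ν, smul_smul]
    rw [inner_smul_right_eq_smul, Complex.smul_re, smul_eq_mul]
  rw [hre]
  simp only [hval] at hint2 ⊢
  set R := r z with hR
  have hRpos : 0 < R := hrU z hz
  have hR1 : R ≤ 1 := hrle z
  set ρ := η * R ^ 4 with hρ
  have hρ0 : 0 < ρ := by positivity
  have hρR : ρ ≤ R / 4 := by
    have : R ^ 4 ≤ R ^ 1 := pow_le_pow_of_le_one hRpos.le hR1 (by norm_num)
    rw [pow_one] at this
    calc ρ ≤ (1/4) * R := by rw [hρ]; gcongr
      _ = R / 4 := by ring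
  set κ := (257 * η ^ 2 * R ^ 8)⁻¹ ^ 2 * (R / 2) ^ 8 with hκ
  have hκ0 : 0 < κ := by positivity
  let φ : ℂ → ℝ := fun y => (Metric.ball z ρ).indicator (fun _ => κ / 2) y - r y ^ 4
  have hφI1 : Integrable (fun y : ℂ => (Metric.ball z ρ).indicator (fun _ => κ / 2) y) := by
    rw [integrable_indicator_iff measurableSet_ball]
    exact integrableOn_const measure_ball_lt_top.ne
  have hφI : Integrable φ := hφI1.sub hI
  have hle : ∫ y, φ y ≤ ∫ y, ((b y + ‖z - y‖ ^ 2)⁻¹ ^ 2 * r y ^ 8) * (inner ℂ (v z) (v y)).re := by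
    refine integral_mono hφI hint2 (fun y => ?_)
    have hK0 : 0 ≤ (b y + ‖z - y‖ ^ 2)⁻¹ ^ 2 * r y ^ 8 :=
      mul_nonneg (by positivity) (pow_nonneg (hr0 y) 8)
    have hr4 : 0 ≤ r y ^ 4 := pow_nonneg (hr0 y) 4
    by_cases hyr : ‖z - y‖ < r y
    · obtain ⟨-, hyU, hin⟩ := hr y z hyr
      by_cases hyb : y ∈ Metric.ball z ρ
      · simp only [φ, Set.indicator_of_mem hyb]
        have hd : ‖z - y‖ < ρ := by
          rwa [Metric.mem_ball, dist_comm, dist_eq_norm] at hyb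
        have hab := abs_le.1 (hrl z y)
        have hrlow : R / 2 ≤ r y := by linarith [hab.2]
        have hrup : r y ≤ 2 * R := by linarith [hab.1]
        have hden : b y + ‖z - y‖ ^ 2 ≤ 257 * η ^ 2 * R ^ 8 := by
          have h1 : b y ≤ η ^ 2 * (2 * R) ^ 8 := by
            simp only [b]
            have := pow_le_pow_left₀ (hr0 y) hrup 8
            gcongr
          have h2 : ‖z - y‖ ^ 2 ≤ ρ ^ 2 := by gcongr
          have h3 : ρ ^ 2 = η ^ 2 * R ^ 8 := by rw [hρ]; ring
          calc _ ≤ η ^ 2 * (2 * R) ^ 8 + η ^ 2 * R ^ 8 := by linarith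
            _ = _ := by ring
        have hKκ : κ ≤ (b y + ‖z - y‖ ^ 2)⁻¹ ^ 2 * r y ^ 8 := by
          rw [hκ]
          have := hbz z hz y
          gcongr
        nlinarith
      · simp only [φ, Set.indicator_of_notMem hyb]
        nlinarith
    · rw [not_lt] at hyr
      have hyb : y ∉ Metric.ball z ρ := by
        intro hyb
        have hd : ‖z - y‖ < ρ := by
          rwa [Metric.mem_ball, dist_comm, dist_eq_norm] at hyb
        have hab := abs_le.1 (hrl z y)
        linarith [hab.2]
      simp only [φ, Set.indicator_of_notMem hyb]
      by_cases hyU : y ∈ U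
      · have hry := hrU y hyU
        have hin : -1 ≤ (inner ℂ (v z) (v y)).re := by
          have h1 := norm_inner_le_norm (𝕜 := ℂ) (v z) (v y)
          rw [hv1 z hz, hv1 y hyU, one_mul] at h1
          exact (abs_le.1 ((Complex.abs_re_le_norm _).trans h1)).1
        have hK : (b y + ‖z - y‖ ^ 2)⁻¹ ^ 2 * r y ^ 8 ≤ r y ^ 4 := by
          have h2 : r y ^ 2 ≤ b y + ‖z - y‖ ^ 2 := by
            have : r y ^ 2 ≤ ‖z - y‖ ^ 2 := by gcongr
            linarith [hb0 y]
          calc _ ≤ (r y ^ 2)⁻¹ ^ 2 * r y ^ 8 := by gcongr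
            _ = r y ^ 4 := by field_simp
        nlinarith
      · simp [hrUc y hyU]
  refine lt_of_lt_of_le ?_ hle
  have hφv : ∫ y, φ y = κ / 2 * (ρ ^ 2 * Real.pi) - A := by
    rw [integral_sub hφI1 hI, integral_indicator measurableSet_ball, setIntegral_const]
    have : volume.real (Metric.ball z ρ) = ρ ^ 2 * Real.pi := by
      rw [Measure.real, Complex.volume_ball, ENNReal.toReal_mul, ENNReal.toReal_pow,
        ENNReal.toReal_ofReal hρ0.le]
      rfl
    rw [this, smul_eq_mul]; ring
  rw [hφv]
  have hk : κ / 2 * (ρ ^ 2 * Real.pi) = Real.pi / (η ^ 2 * (2 * 2 ^ 8 * 257 ^ 2)) := by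
    rw [hκ, hρ]; field_simp
  rw [hk, sub_pos, lt_div_iff₀ (by positivity)]
  have := Real.pi_gt_three
  nlinarith [sq_nonneg η]
end approx2

section final
abbrev E2 := EuclideanSpace ℂ (Fin 2)

def projL (l : E2) : E2 →L[ℂ] E2 :=
  ((‖l‖ ^ 2 : ℝ) : ℂ)⁻¹ • (innerSL ℂ l).smulRight l

theorem projL_apply (l u : E2) :
    projL l u = (((‖l‖ ^ 2 : ℝ) : ℂ)⁻¹ * inner ℂ l u) • l := by
  simp [projL, smul_smul]

theorem projL_self (l : E2) : projL l l = l := by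
  by_cases hl : l = 0
  · simp [projL_apply, hl]
  have : ‖l‖ ≠ 0 := norm_ne_zero_iff.2 hl
  rw [projL_apply, inner_self_eq_norm_sq_to_K]
  push_cast
  have h2 : ((‖l‖ : ℂ)) ≠ 0 := by exact_mod_cast this
  rw [show ((‖l‖ : ℂ) ^ 2)⁻¹ * ((RCLike.ofReal ‖l‖ : ℂ)) ^ 2 = 1 from
    inv_mul_cancel₀ (pow_ne_zero 2 h2), one_smul]

theorem projL_idem (l u : E2) : projL l (projL l u) = projL l u := by
  conv_lhs => rw [projL_apply l u]
  rw [map_smul, projL_self, ← projL_apply]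

theorem projL_smul (l : E2) (t : ℂ) (ht : t ≠ 0) : projL (t • l) = projL l := by
  ext1 u
  by_cases hl : l = 0
  · simp [projL_apply, hl]
  have h1 : (‖l‖ : ℂ) ≠ 0 := by exact_mod_cast norm_ne_zero_iff.2 hl
  have h2 : (‖t‖ : ℂ) ≠ 0 := by exact_mod_cast norm_ne_zero_iff.2 ht
  rw [projL_apply, projL_apply, smul_smul, inner_smul_left, norm_smul]
  congr 1
  push_cast
  have h3 : (starRingEnd ℂ) t * t = (‖t‖ : ℂ) ^ 2 := Complex.conj_mul' t
  field_simp
  linear_combination (inner ℂ l u) * h3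

theorem projL_cont {X : Type*} [TopologicalSpace X] (f : X → E2) (x : X) (hf : ContinuousAt f x)
    (hx : f x ≠ 0) : ContinuousAt (fun y => projL (f y)) x := by
  have h1 : ContinuousAt (fun y => ((‖f y‖ ^ 2 : ℝ) : ℂ)⁻¹) x := by
    apply ContinuousAt.inv₀
    · exact Complex.continuous_ofReal.continuousAt.comp (hf.norm.pow 2)
    · have := norm_ne_zero_iff.2 hx
      exact_mod_cast pow_ne_zero 2 this
  have h2 : ContinuousAt (fun y => (innerSL ℂ (f y)).smulRight (f y)) x := by
    have h3 : ContinuousAt (fun y => innerSL ℂ (f y)) x :=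
      (innerSL ℂ (E := E2)).continuous.continuousAt.comp hf
    have := ((ContinuousLinearMap.smulRightL ℂ E2 E2).continuous.continuousAt.comp h3).clm_apply hf
    exact this
  exact h1.smul h2

def lrow (M : Matrix (Fin 2) (Fin 2) ℂ) : E2 := !₂[M 1 0, M 1 1]

theorem lrow_ne (M : Matrix (Fin 2) (Fin 2) ℂ) (h : M.det = 1) : lrow M ≠ 0 := by
  intro h0
  have e0 : M 1 0 = 0 := by simpa [lrow] using congrArg (fun v : E2 => v 0) h0
  have e1 : M 1 1 = 0 := by simpa [lrow] using congrArg (fun v : E2 => v 1) h0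
  rw [Matrix.det_fin_two, e0, e1] at h
  simp at h

theorem lrow_prop (M N : Matrix (Fin 2) (Fin 2) ℂ) (hM : M.det = 1) (hN : N.det = 1)
    (h : (M * N⁻¹) 1 0 = 0) : ∃ t : ℂ, t ≠ 0 ∧ lrow M = t • lrow N := by
  have h1 : M 1 0 * N 1 1 - M 1 1 * N 1 0 = 0 := by
    rw [Matrix.inv_def, hN, Matrix.adjugate_fin_two] at h
    simp [Matrix.mul_apply, Fin.sum_univ_two] at h
    linear_combination h
  rw [Matrix.det_fin_two] at hM hN
  have key : lrow M = (N 0 0 * M 1 1 - N 0 1 * M 1 0) • lrow N := by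
    ext i
    fin_cases i
    · simp [lrow]
      linear_combination (-M 1 0) * hN + N 0 0 * h1
    · simp [lrow]
      linear_combination (-M 1 1) * hN + N 0 1 * h1
  refine ⟨_, ?_, key⟩
  intro h0
  rw [h0, zero_smul] at key
  exact lrow_ne M (by rw [Matrix.det_fin_two]; exact hM) key

theorem section_exists (ι : Type*) (U : Set ℂ) (hUo : IsOpen U) (hUc : ContractibleSpace U)
    (Uδ : ι → Set ℂ) (hδo : ∀ δ, IsOpen (Uδ δ)) (hcover : U = ⋃ δ, Uδ δ)
    (q : ι → ℂ → Matrix (Fin 2) (Fin 2) ℂ)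
    (hq_an : ∀ δ, ∀ i j, AnalyticOnNhd ℝ (fun z => q δ z i j) (Uδ δ))
    (hq_det : ∀ δ, ∀ z ∈ Uδ δ, (q δ z).det = 1)
    (hcoc : ∀ α β, ∀ z ∈ Uδ α ∩ Uδ β, (q α z * (q β z)⁻¹) 1 0 = 0) :
    ∃ s : ℂ → E2, (∀ i, AnalyticOnNhd ℝ (fun z => s z i) U) ∧
      ∀ δ, ∀ z ∈ Uδ δ, ∃ t : ℂ, t ≠ 0 ∧ s z = t • lrow (q δ z) := by
  have hex : ∀ z : ℂ, z ∈ U → ∃ δ, z ∈ Uδ δ := by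
    intro z hz
    rw [hcover] at hz
    exact Set.mem_iUnion.1 hz
  have hPeq : ∀ α β, ∀ z ∈ Uδ α ∩ Uδ β, projL (lrow (q α z)) = projL (lrow (q β z)) := by
    intro α β z hz
    obtain ⟨t, ht, h⟩ := lrow_prop _ _ (hq_det α z hz.1) (hq_det β z hz.2) (hcoc α β z hz)
    rw [h, projL_smul _ _ ht]
  have : Nonempty ι := by
    obtain ⟨x⟩ := (inferInstance : Nonempty U)
    exact ⟨(hex x x.2).choose⟩
  have : ∀ z : ℂ, ∃ δ, z ∈ U → z ∈ Uδ δ := by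
    intro z
    by_cases hz : z ∈ U
    · obtain ⟨δ, h⟩ := hex z hz
      exact ⟨δ, fun _ => h⟩
    · exact ⟨Classical.arbitrary ι, fun h => absurd h hz⟩
  choose d hd using this
  let P : ℂ → (E2 →L[ℂ] E2) := fun z => projL (lrow (q (d z) z))
  have hP : ∀ δ, ∀ z ∈ Uδ δ, P z = projL (lrow (q δ z)) := by
    intro δ z hz
    have hzU : z ∈ U := by rw [hcover]; exact Set.mem_iUnion.2 ⟨δ, hz⟩
    exact hPeq _ _ z ⟨hd z hzU, hz⟩
  have hlc : ∀ δ, ∀ z ∈ Uδ δ, ContinuousAt (fun z => lrow (q δ z)) z := by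
    intro δ z hz
    have h : ContinuousAt (fun z => (![q δ z 1 0, q δ z 1 1] : Fin 2 → ℂ)) z := by
      rw [continuousAt_pi]
      intro i
      fin_cases i
      · exact (hq_an δ 1 0 z hz).continuousAt
      · exact (hq_an δ 1 1 z hz).continuousAt
    exact (PiLp.continuous_toLp 2 (fun _ : Fin 2 => ℂ)).continuousAt.comp h
  have hPc : ∀ z ∈ U, ContinuousAt P z := by
    intro z hz
    have hzd := hd z hz
    have h := projL_cont _ z (hlc _ z hzd) (lrow_ne _ (hq_det _ z hzd))
    refine h.congr ?_
    filter_upwards [(hδo _).mem_nhds hzd] with y hy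
    exact (hP _ y hy).symm
  obtain ⟨v, hvc, hv⟩ := lift_exists (X := U) (fun x => P x)
    (continuous_iff_continuousAt.2 fun x =>
      (hPc x x.2).comp continuous_subtype_val.continuousAt)
    (fun x u => projL_idem _ _)
    (fun x => ⟨lrow (q (d x) x), by
      show projL _ _ ≠ 0
      rw [projL_self]; exact lrow_ne _ (hq_det _ _ (hd x x.2))⟩)
  classical
  let V : ℂ → E2 := fun z => if h : z ∈ U then ((‖v ⟨z, h⟩‖ : ℂ)⁻¹) • v ⟨z, h⟩ else 0
  have hV : ∀ z (h : z ∈ U), V z = ((‖v ⟨z, h⟩‖ : ℂ)⁻¹) • v ⟨z, h⟩ := fun z h => dif_pos h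
  have hVc : ContinuousOn V U := by
    rw [continuousOn_iff_continuous_domRestrict]
    have : U.domRestrict V = fun x => ((‖v x‖ : ℂ)⁻¹) • v x := by
      ext1 x
      exact hV x x.2
    rw [this]
    refine Continuous.smul (Continuous.inv₀ (Complex.continuous_ofReal.comp hvc.norm) ?_) hvc
    intro x
    exact Complex.ofReal_ne_zero.2 (norm_ne_zero_iff.2 (hv x).1)
  have hV1 : ∀ z ∈ U, ‖V z‖ = 1 := by
    intro z hz
    rw [hV z hz, norm_smul, norm_inv, Complex.norm_real, norm_norm]
    exact inv_mul_cancel₀ (norm_ne_zero_iff.2 (hv ⟨z, hz⟩).1)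
  have hPV : ∀ z ∈ U, P z (V z) = V z := by
    intro z hz
    rw [hV z hz, map_smul, (hv ⟨z, hz⟩).2]
  obtain ⟨w, hwan, hw⟩ := approx_exists U hUo V hVc hV1
  have hwi : ∀ i, AnalyticOnNhd ℝ (fun z => w z i) U := by
    intro i z hz
    exact (((EuclideanSpace.proj (𝕜 := ℂ) i : E2 →L[ℂ] ℂ).restrictScalars ℝ).analyticAt _).comp
      (hwan z hz)
  refine ⟨fun z => P z (w z), ?_, ?_⟩
  · intro i z hz
    have hzd := hd z hz
    set δ := d z
    have hconj : ∀ j k, AnalyticAt ℝ (fun z => (starRingEnd ℂ) (q δ z j k)) z := fun j k =>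
      ((Complex.conjCLE : ℂ →L[ℝ] ℂ).analyticAt _).comp (hq_an δ j k z hzd)
    have hform : ∀ y, projL (lrow (q δ y)) (w y) i =
        ((q δ y 1 0 * (starRingEnd ℂ) (q δ y 1 0) + q δ y 1 1 * (starRingEnd ℂ) (q δ y 1 1))⁻¹ *
          ((starRingEnd ℂ) (q δ y 1 0) * w y 0 + (starRingEnd ℂ) (q δ y 1 1) * w y 1))
          * q δ y 1 i := by
      intro y
      rw [projL_apply]
      have e1 : ((‖lrow (q δ y)‖ ^ 2 : ℝ) : ℂ) = q δ y 1 0 * (starRingEnd ℂ) (q δ y 1 0)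
          + q δ y 1 1 * (starRingEnd ℂ) (q δ y 1 1) := by
        rw [EuclideanSpace.norm_sq_eq, Fin.sum_univ_two, Complex.mul_conj', Complex.mul_conj']
        simp [lrow]
      have e2 : inner ℂ (lrow (q δ y)) (w y) = (starRingEnd ℂ) (q δ y 1 0) * w y 0
          + (starRingEnd ℂ) (q δ y 1 1) * w y 1 := by
        simp [PiLp.inner_apply, Fin.sum_univ_two, lrow]
        ring
      rw [e1, e2]
      fin_cases i <;> simp [lrow]
    have hne : q δ z 1 0 * (starRingEnd ℂ) (q δ z 1 0)
        + q δ z 1 1 * (starRingEnd ℂ) (q δ z 1 1) ≠ 0 := by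
      have h0 := norm_ne_zero_iff.2 (lrow_ne _ (hq_det δ z hzd))
      have e1 : ((‖lrow (q δ z)‖ ^ 2 : ℝ) : ℂ) = q δ z 1 0 * (starRingEnd ℂ) (q δ z 1 0)
          + q δ z 1 1 * (starRingEnd ℂ) (q δ z 1 1) := by
        rw [EuclideanSpace.norm_sq_eq, Fin.sum_univ_two, Complex.mul_conj', Complex.mul_conj']
        simp [lrow]
      rw [← e1]
      exact_mod_cast pow_ne_zero 2 h0
    have han : AnalyticAt ℝ (fun y => projL (lrow (q δ y)) (w y) i) z := by
      simp only [hform]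
      exact (((((hq_an δ 1 0 z hzd).mul (hconj 1 0)).add
        ((hq_an δ 1 1 z hzd).mul (hconj 1 1))).inv hne).mul
        (((hconj 1 0).mul (hwi 0 z hz)).add ((hconj 1 1).mul (hwi 1 z hz)))).mul
        (hq_an δ 1 i z hzd)
    refine han.congr ?_
    filter_upwards [(hδo _).mem_nhds hzd] with y hy
    rw [hP δ y hy]
  · intro δ z hz
    have hzU : z ∈ U := by rw [hcover]; exact Set.mem_iUnion.2 ⟨δ, hz⟩
    refine ⟨_, ?_, by beta_reduce; rw [hP δ z hz, projL_apply]⟩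
    have h0 := norm_ne_zero_iff.2 (lrow_ne _ (hq_det δ z hz))
    refine mul_ne_zero (inv_ne_zero (by exact_mod_cast pow_ne_zero 2 h0)) ?_
    intro hin
    have h1 := hPV z hzU
    rw [hP δ z hz, projL_apply] at h1
    have h2 := hw z hzU
    rw [← h1, inner_smul_left, hin, mul_zero] at h2
    simp at h2
end final

/-- Cocycle–coboundary step in the proof of Lemma 4.1: on a contractible open
`U ⊆ ℂ` covered by open sets `U_δ`, real analytic `SL(2,ℂ)`-valued maps `q_δ`
whose transition maps `q_α q_β⁻¹` are upper triangular admit upper triangular real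
analytic `SL(2,ℂ)`-valued maps `h_δ` with `q_α q_β⁻¹ = h_α h_β⁻¹` on overlaps;
equivalently `g = h_δ⁻¹ q_δ` is globally well defined. -/
theorem stmt12 (ι : Type*) (U : Set ℂ) (hUo : IsOpen U) (hUc : ContractibleSpace U)
    (Uδ : ι → Set ℂ) (hδo : ∀ δ, IsOpen (Uδ δ)) (hcover : U = ⋃ δ, Uδ δ)
    (q : ι → ℂ → Matrix (Fin 2) (Fin 2) ℂ)
    (hq_an : ∀ δ, ∀ i j, AnalyticOn ℝ (fun z => q δ z i j) (Uδ δ))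
    (hq_det : ∀ δ, ∀ z ∈ Uδ δ, (q δ z).det = 1)
    (hcoc : ∀ α β, ∀ z ∈ Uδ α ∩ Uδ β, (q α z * (q β z)⁻¹) 1 0 = 0) :
    ∃ h : ι → ℂ → Matrix (Fin 2) (Fin 2) ℂ,
      (∀ δ, ∀ i j, AnalyticOn ℝ (fun z => h δ z i j) (Uδ δ)) ∧
      (∀ δ, ∀ z ∈ Uδ δ, (h δ z).det = 1) ∧
      (∀ δ, ∀ z ∈ Uδ δ, (h δ z) 1 0 = 0) ∧
      (∀ α β, ∀ z ∈ Uδ α ∩ Uδ β, q α z * (q β z)⁻¹ = h α z * (h β z)⁻¹) ∧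
      (∀ α β, ∀ z ∈ Uδ α ∩ Uδ β, (h α z)⁻¹ * q α z = (h β z)⁻¹ * q β z) := by
  have hq_an' : ∀ δ, ∀ i j, AnalyticOnNhd ℝ (fun z => q δ z i j) (Uδ δ) := fun δ i j =>
    (hδo δ).analyticOn_iff_analyticOnNhd.1 (hq_an δ i j)
  obtain ⟨s, hsan, hs⟩ := section_exists ι U hUo hUc Uδ hδo hcover q hq_an' hq_det hcoc
  have hsub : ∀ δ, ∀ z ∈ Uδ δ, z ∈ U := fun δ z hz => by
    rw [hcover]; exact Set.mem_iUnion.2 ⟨δ, hz⟩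
  let N : ℂ → ℂ := fun z =>
    s z 0 * (starRingEnd ℂ) (s z 0) + s z 1 * (starRingEnd ℂ) (s z 1)
  have hN : ∀ δ, ∀ z ∈ Uδ δ, N z ≠ 0 := by
    intro δ z hz
    obtain ⟨t, ht, h⟩ := hs δ z hz
    have hsz : s z ≠ 0 := by
      rw [h]; exact smul_ne_zero ht (lrow_ne _ (hq_det δ z hz))
    have e1 : ((‖s z‖ ^ 2 : ℝ) : ℂ) = N z := by
      rw [EuclideanSpace.norm_sq_eq, Fin.sum_univ_two]
      simp only [N]
      rw [Complex.mul_conj', Complex.mul_conj']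
      push_cast; rfl
    rw [← e1]
    exact_mod_cast pow_ne_zero 2 (norm_ne_zero_iff.2 hsz)
  let G : ℂ → Matrix (Fin 2) (Fin 2) ℂ := fun z =>
    !![s z 1, (starRingEnd ℂ) (s z 0) * (N z)⁻¹; -s z 0, (starRingEnd ℂ) (s z 1) * (N z)⁻¹]
  have hGdet : ∀ δ, ∀ z ∈ Uδ δ, (G z).det = 1 := by
    intro δ z hz
    have h1 := hN δ z hz
    simp only [G, Matrix.det_fin_two_of]
    field_simp
    simp only [N]; ring
  have hGan : ∀ δ, ∀ i j, AnalyticOnNhd ℝ (fun z => G z i j) (Uδ δ) := by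
    intro δ i j z hz
    have h0 := hsan 0 z (hsub δ z hz)
    have h1 := hsan 1 z (hsub δ z hz)
    have c0 : AnalyticAt ℝ (fun z => (starRingEnd ℂ) (s z 0)) z :=
      ((Complex.conjCLE : ℂ →L[ℝ] ℂ).analyticAt _).comp h0
    have c1 : AnalyticAt ℝ (fun z => (starRingEnd ℂ) (s z 1)) z :=
      ((Complex.conjCLE : ℂ →L[ℝ] ℂ).analyticAt _).comp h1
    have hNi : AnalyticAt ℝ (fun z => (N z)⁻¹) z :=
      ((h0.mul c0).add (h1.mul c1)).inv (hN δ z hz)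
    fin_cases i <;> fin_cases j
    · exact h1
    · exact c0.mul hNi
    · exact h0.neg
    · exact c1.mul hNi
  have hGG : ∀ δ, ∀ z ∈ Uδ δ, G z * (G z)⁻¹ = 1 := fun δ z hz =>
    Matrix.mul_nonsing_inv _ (by rw [hGdet δ z hz]; exact isUnit_one)
  have hqq : ∀ δ, ∀ z ∈ Uδ δ, (q δ z)⁻¹ * q δ z = 1 := fun δ z hz =>
    Matrix.nonsing_inv_mul _ (by rw [hq_det δ z hz]; exact isUnit_one)
  refine ⟨fun δ z => q δ z * G z, ?_, ?_, ?_, ?_, ?_⟩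
  · intro δ i j
    refine AnalyticOnNhd.analyticOn ?_
    intro z hz
    simp only [Matrix.mul_apply, Fin.sum_univ_two]
    exact ((hq_an' δ i 0 z hz).mul (hGan δ 0 j z hz)).add
      ((hq_an' δ i 1 z hz).mul (hGan δ 1 j z hz))
  · intro δ z hz
    rw [Matrix.det_mul, hq_det δ z hz, hGdet δ z hz, one_mul]
  · intro δ z hz
    obtain ⟨t, ht, h⟩ := hs δ z hz
    simp only [Matrix.mul_apply, Fin.sum_univ_two, G]
    rw [h]
    simp [lrow]
    ring
  · intro α β z hz
    simp only [Matrix.mul_inv_rev]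
    rw [Matrix.mul_assoc, ← Matrix.mul_assoc (G z), hGG α z hz.1, Matrix.one_mul]
  · intro α β z hz
    simp only [Matrix.mul_inv_rev]
    rw [Matrix.mul_assoc, Matrix.mul_assoc, hqq α z hz.1, hqq β z hz.2]
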